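/- Assume k has characteristic zero and the hyperplanes are in general position. Let R_+ denote the (maximal) ideal of R generated by the images of all the variables T_0,…,T_d, X_1,…,X_n. Then for every prime ideal 𝔭 of R with 𝔭 ≠ R_+, the localization R_𝔭 is a regular local ring. In particular R has isolated singularities. -/

import Mathlib

open MvPolynomial

/-- The polynomial `h_i = X_i^{p_i} − ℓ_i` in `S = k[T_0,…,T_d, X_1,…,X_n]`, where
`ℓ_i = Σ_j λ_{ij} T_j`; the `T`'s are the variables indexed by `Sum.inl` and the `X`'s
are the variables indexed by `Sum.inr`. -/
noncomputable def GLh (k : Type*) [Field k] (d n : ℕ) (p : Fin n → ℕ)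
    (lam : Fin n → Fin (d + 1) → k) (i : Fin n) :
    MvPolynomial (Fin (d + 1) ⊕ Fin n) k :=
  X (Sum.inr i) ^ p i - ∑ j, C (lam i j) * X (Sum.inl j)

/-- The Geigle–Lenzing complete intersection `R = S/(h_1, …, h_n)`. -/
abbrev GLring (k : Type*) [Field k] (d n : ℕ) (p : Fin n → ℕ)
    (lam : Fin n → Fin (d + 1) → k) : Type _ :=
  MvPolynomial (Fin (d + 1) ⊕ Fin n) k ⧸ Ideal.span (Set.range (GLh k d n p lam))

/-- A Noetherian local ring is regular if its maximal ideal can be generated by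
(Krull dimension)-many elements. -/
def IsRegularLocal (A : Type*) [CommRing A] [IsLocalRing A] : Prop :=
  IsNoetherianRing A ∧ ∃ s : Finset A,
    Ideal.span (s : Set A) = IsLocalRing.maximalIdeal A ∧
      (s.card : WithBot (WithTop ℕ)) = ringKrullDim A

lemma GL_pderiv_sq {k σ : Type*} [CommRing k] (P : Ideal (MvPolynomial σ k)) (v : σ)
    {f : MvPolynomial σ k} (hf : f ∈ P ^ 2) : pderiv v f ∈ P := by
  rw [pow_two] at hf
  induction hf using Submodule.mul_induction_on' with
  | mem_mul_mem a ha b hb =>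
    rw [Derivation.leibniz]
    exact P.add_mem (P.mul_mem_right _ ha) (P.mul_mem_right _ hb)
  | add a _ b _ iha ihb =>
    rw [map_add]
    exact P.add_mem iha ihb

lemma GL_all_vars (k : Type*) [Field k]
    (d n : ℕ) (p : Fin n → ℕ) (hp : ∀ i, 0 < p i)
    (lam : Fin n → Fin (d + 1) → k)
    (hgen : ∀ t : Finset (Fin n), t.card ≤ d + 1 →
      LinearIndependent k (fun i : t => lam i))
    (P : Ideal (MvPolynomial (Fin (d + 1) ⊕ Fin n) k)) [P.IsPrime]
    (hP : ∀ i, GLh k d n p lam i ∈ P)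
    (t : Finset (Fin n)) (ht : t.card = d + 1) (htP : ∀ i ∈ t, X (Sum.inr i) ∈ P) (v) :
    X v ∈ P := by
  have hl : ∀ i ∈ t, (∑ j, C (lam i j) * X (Sum.inl j) : MvPolynomial _ k) ∈ P := by
    intro i hi
    have h1 : X (Sum.inr i) ^ p i ∈ P := P.pow_mem_of_mem (htP i hi) _ (hp i)
    have h2 := P.sub_mem h1 (hP i)
    simpa [GLh] using h2
  have hspan := (hgen t ht.le).span_eq_top_of_card_eq_finrank' (by simp [ht])
  have hT : ∀ j, (X (Sum.inl j) : MvPolynomial (Fin (d + 1) ⊕ Fin n) k) ∈ P := by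
    intro j
    have hj : (Pi.single j 1 : Fin (d + 1) → k) ∈
        Submodule.span k (Set.range fun i : t => lam i) := by rw [hspan]; trivial
    obtain ⟨c, hc⟩ := (Submodule.mem_span_range_iff_exists_fun k).1 hj
    have key : (X (Sum.inl j) : MvPolynomial (Fin (d + 1) ⊕ Fin n) k) =
        ∑ i : t, C (c i) * ∑ j', C (lam i j') * X (Sum.inl j') := by
      have h3 : ∀ j', ∑ i : t, c i * lam i j' = (Pi.single j 1 : Fin (d + 1) → k) j' := by
        intro j'
        rw [← hc]
        simp
      simp_rw [Finset.mul_sum]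
      rw [Finset.sum_comm]
      simp_rw [← mul_assoc, ← C_mul, ← Finset.sum_mul, ← map_sum, h3]
      rw [Finset.sum_eq_single j]
      · simp
      · intro b _ hb
        simp [hb]
      · simp
    rw [key]
    exact P.sum_mem fun i _ => P.mul_mem_left _ (hl i i.2)
  rcases v with j | i
  · exact hT j
  · have h2 := P.add_mem (hP i)
      (P.sum_mem (t := Finset.univ) fun j _ => P.mul_mem_left (C (lam i j)) (hT j))
    have h3 : (X (Sum.inr i) : MvPolynomial (Fin (d + 1) ⊕ Fin n) k) ^ p i ∈ P := by
      simpa [GLh] using h2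
    exact Ideal.IsPrime.mem_of_pow_mem ‹_› _ h3

lemma GL_jacobian (k : Type*) [Field k] [CharZero k]
    (d n : ℕ) (p : Fin n → ℕ) (hp : ∀ i, 0 < p i)
    (lam : Fin n → Fin (d + 1) → k)
    (hgen : ∀ t : Finset (Fin n), t.card ≤ d + 1 →
      LinearIndependent k (fun i : t => lam i))
    (P : Ideal (MvPolynomial (Fin (d + 1) ⊕ Fin n) k)) [hPp : P.IsPrime]
    (hP : ∀ i, GLh k d n p lam i ∈ P)
    (hv : ∃ v, X v ∉ P)
    (s : Fin n → MvPolynomial (Fin (d + 1) ⊕ Fin n) k)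
    (hs : ∑ i, s i * GLh k d n p lam i ∈ P ^ 2) (i : Fin n) : s i ∈ P := by
  classical
  have hder : ∀ v, ∑ i, s i * pderiv v (GLh k d n p lam i) ∈ P := by
    intro v
    have h1 := GL_pderiv_sq P v hs
    rw [map_sum] at h1
    simp only [Derivation.leibniz, smul_eq_mul, Finset.sum_add_distrib] at h1
    exact (P.add_mem_iff_left (P.sum_mem fun i _ => P.mul_mem_right _ (hP i))).1 h1
  have hX : ∀ i, X (Sum.inr i) ∉ P → s i ∈ P := by
    intro i hi
    have h1 := hder (Sum.inr i)
    rw [Finset.sum_eq_single i] at h1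
    · have h2 : pderiv (Sum.inr i) (GLh k d n p lam i) = C (p i : k) * X (Sum.inr i) ^ (p i - 1) := by
        simp [GLh, pderiv_X, Derivation.leibniz, Derivation.leibniz_pow]
      rw [h2] at h1
      rcases hPp.mem_or_mem h1 with h | h
      · exact h
      rcases hPp.mem_or_mem h with h | h
      · exfalso
        refine hPp.ne_top (P.eq_top_of_isUnit_mem h ?_)
        exact (isUnit_iff_ne_zero.2 (by exact_mod_cast (hp i).ne')).map C
      · exact absurd (hPp.mem_of_pow_mem _ h) hi
    · intro b _ hb
      simp [GLh, pderiv_X, Derivation.leibniz, Derivation.leibniz_pow, hb]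
    · simp
  have hT : ∀ j, ∑ i, s i * C (lam i j) ∈ P := by
    intro j
    have h1 := P.neg_mem (hder (Sum.inl j))
    have h2 : ∀ i, pderiv (Sum.inl j) (GLh k d n p lam i) = - C (lam i j) := by
      intro i
      simp [GLh, pderiv_X, Derivation.leibniz, Derivation.leibniz_pow, Pi.single_apply]
    simpa [h2] using h1
  set t : Finset (Fin n) := Finset.univ.filter fun i => X (Sum.inr i) ∈ P with htdef
  have ht : t.card ≤ d + 1 := by
    by_contra hcon
    obtain ⟨t', ht', hc⟩ := Finset.exists_subset_card_eq (not_le.1 hcon).le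
    obtain ⟨v, hv⟩ := hv
    exact hv (GL_all_vars k d n p hp lam hgen P hP t' hc
      (fun i hi => by simpa [htdef] using ht' hi) v)
  by_cases hi : i ∈ t
  swap
  · exact hX i (by simpa [htdef] using hi)
  obtain ⟨g, hg⟩ := LinearMap.exists_leftInverse_of_injective _
    (LinearMap.ker_eq_bot.2 (hgen t ht))
  let φ : (Fin (d + 1) → k) →ₗ[k] k := (Finsupp.lapply ⟨i, hi⟩) ∘ₗ g
  have hφ : ∀ i' : t, φ (lam i') = if i' = ⟨i, hi⟩ then 1 else 0 := by
    intro i'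
    have := congrArg (fun f => f (Finsupp.single i' 1)) hg
    simp only [LinearMap.comp_apply, Finsupp.linearCombination_single, one_smul,
      LinearMap.id_apply] at this
    simp [φ, this, Finsupp.single_apply]
  have hφ2 : ∀ w : Fin (d + 1) → k, φ w = ∑ j, w j * φ (Pi.single j 1) := by
    intro w
    conv_lhs => rw [pi_eq_sum_univ' w]
    simp
  have hT2 : ∀ j, ∑ i : t, s i * C (lam i j) ∈ P := by
    intro j
    have h1 := hT j
    rw [← Finset.sum_add_sum_compl t] at h1
    rw [Finset.sum_coe_sort t (fun i => s i * C (lam i j))]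
    refine (P.add_mem_iff_left (P.sum_mem fun i hi => P.mul_mem_right _ (hX i ?_))).1 h1
    simpa [htdef] using hi
  have hfin : s i = ∑ j, (∑ i : t, s i * C (lam i j)) * C (φ (Pi.single j 1)) := by
    simp_rw [Finset.sum_mul]
    rw [Finset.sum_comm]
    simp_rw [mul_assoc, ← C_mul, ← Finset.mul_sum, ← map_sum, ← hφ2, hφ]
    rw [Finset.sum_eq_single (⟨i, hi⟩ : t)]
    · simp
    · intro b _ hb
      simp [hb]
    · simp
  rw [hfin]
  exact P.sum_mem fun j _ => P.mul_mem_right _ (hT2 j)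

lemma GL_gens {S : Type*} [CommRing S] [IsNoetherianRing S] (P : Ideal S) [hPp : P.IsPrime]
    (n : ℕ) (h : Fin n → S) (hP : ∀ i, h i ∈ P)
    (hind : ∀ s : Fin n → S, ∑ i, s i * h i ∈ P ^ 2 → ∀ i, s i ∈ P) :
    ∃ G : Set (Localization.AtPrime P), G.Finite ∧
      G.ncard + n = (IsLocalRing.maximalIdeal (Localization.AtPrime P)).spanFinrank ∧
      Ideal.span (Set.range (fun i => algebraMap S (Localization.AtPrime P) (h i)) ∪ G) =
        IsLocalRing.maximalIdeal (Localization.AtPrime P) := by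
  classical
  set A := Localization.AtPrime P
  set m := IsLocalRing.maximalIdeal A with hm
  have hmP : m = P.map (algebraMap S A) := (Localization.AtPrime.map_eq_maximalIdeal).symm
  have hmem : ∀ i, algebraMap S A (h i) ∈ m := fun i => by
    rw [hmP]; exact Ideal.mem_map_of_mem _ (hP i)
  let v : Fin n → IsLocalRing.CotangentSpace A := fun i => m.toCotangent ⟨_, hmem i⟩
  have hA : ∀ a : Fin n → A, ∑ i, a i * algebraMap S A (h i) ∈ m ^ 2 → ∀ i, a i ∈ m := by
    intro a ha i
    obtain ⟨b, hb⟩ := IsLocalization.exist_integer_multiples_of_finite P.primeCompl a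
    choose s hs using hb
    have h1 : algebraMap S A (∑ i, s i * h i) ∈ (P ^ 2).map (algebraMap S A) := by
      rw [Ideal.map_pow, ← hmP]
      have : algebraMap S A (∑ i, s i * h i) =
          algebraMap S A b * ∑ i, a i * algebraMap S A (h i) := by
        rw [map_sum, Finset.mul_sum]
        refine Finset.sum_congr rfl fun i _ => ?_
        rw [map_mul, hs, Algebra.smul_def, mul_assoc]
      rw [this]
      exact Ideal.mul_mem_left _ _ ha
    obtain ⟨⟨x, u⟩, hxu⟩ := (IsLocalization.mem_map_algebraMap_iff P.primeCompl A).1 h1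
    simp only [← map_mul] at hxu
    obtain ⟨w, hw⟩ := (IsLocalization.eq_iff_exists P.primeCompl A).1 hxu
    have h2 : ∑ i, ((w * u : S) * s i) * h i ∈ P ^ 2 := by
      have : ∑ i, ((w * u : S) * s i) * h i = w * x := by
        rw [← hw]
        simp only [Finset.mul_sum, Finset.sum_mul]
        refine Finset.sum_congr rfl fun i _ => ?_
        ring
      rw [this]
      exact Ideal.mul_mem_left _ _ x.2
    have h3 := hind _ h2 i
    have h4 : s i ∈ P := by
      rcases hPp.mem_or_mem h3 with h | h
      · exact absurd h (w * u).2
      · exact h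
    have h5 : algebraMap S A b * a i ∈ m := by
      have := hs i
      rw [Algebra.smul_def] at this
      rw [← this, hmP]
      exact Ideal.mem_map_of_mem _ h4
    rcases (IsLocalRing.maximalIdeal.isMaximal A).isPrime.mem_or_mem h5 with h | h
    · exact absurd (IsLocalization.map_units A b) h
    · exact h
  have hv : LinearIndependent (IsLocalRing.ResidueField A) v := by
    rw [Fintype.linearIndependent_iff]
    intro c hc i
    choose a ha using fun i => IsLocalRing.residue_surjective (c i)
    have h1 : ∑ i, a i * algebraMap S A (h i) ∈ m ^ 2 := by
      have h2 : m.toCotangent (∑ i, a i • (⟨_, hmem i⟩ : m)) = 0 := by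
        rw [map_sum, ← hc]
        refine Finset.sum_congr rfl fun i _ => ?_
        rw [map_smul, ← ha]
        rfl
      rw [Ideal.toCotangent_eq_zero] at h2
      simpa using h2
    rw [← ha, IsLocalRing.residue_eq_zero_iff]
    exact hA a h1 i
  have hfr : m.spanFinrank = Module.finrank (IsLocalRing.ResidueField A)
      (IsLocalRing.CotangentSpace A) := IsLocalRing.spanFinrank_maximalIdeal_eq_finrank_cotangentSpace A
  let W := Submodule.span (IsLocalRing.ResidueField A) (Set.range v)
  have hW : Module.finrank (IsLocalRing.ResidueField A) W = n := by
    rw [finrank_span_eq_card hv, Fintype.card_fin]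
  have hQ := Submodule.finrank_quotient_add_finrank W
  rw [hW, ← hfr] at hQ
  let b := Module.finBasis (IsLocalRing.ResidueField A) (IsLocalRing.CotangentSpace A ⧸ W)
  choose y hy using fun i => W.mkQ_surjective (b i)
  choose z hz using fun i => m.toCotangent_surjective (y i)
  have htop : Submodule.span (IsLocalRing.ResidueField A)
      (m.toCotangent '' (Set.range (fun i => (⟨_, hmem i⟩ : m)) ∪ Set.range z)) = ⊤ := by
    rw [Set.image_union, Submodule.span_union, ← Set.range_comp, ← Set.range_comp]
    have e1 : (⇑m.toCotangent ∘ fun i => (⟨_, hmem i⟩ : m)) = v := rfl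
    have e2 : (⇑m.toCotangent ∘ z) = y := funext hz
    rw [e1, e2]
    change W ⊔ _ = ⊤
    have e3 : (Submodule.span (IsLocalRing.ResidueField A) (Set.range y)).map W.mkQ = ⊤ := by
      rw [Submodule.map_span, ← Set.range_comp]
      have : (⇑W.mkQ ∘ y) = b := funext hy
      rw [this, b.span_eq]
    have e4 := congrArg (Submodule.comap W.mkQ) e3
    rwa [Submodule.comap_map_mkQ, Submodule.comap_top] at e4
  have htop2 := IsLocalRing.CotangentSpace.span_image_eq_top_iff.1 htop
  have hspan := congrArg (Submodule.map m.subtype) htop2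
  rw [Submodule.map_span, Submodule.map_top, Submodule.range_subtype, Set.image_union,
    ← Set.range_comp, ← Set.range_comp] at hspan
  -- `G` has at most the right number of elements; equality by minimality
  have hspan' : Ideal.span (Set.range (fun i => algebraMap S A (h i)) ∪
      Set.range (m.subtype ∘ z)) = m := hspan
  have hGfin : (Set.range (m.subtype ∘ z)).Finite := Set.finite_range _
  refine ⟨Set.range (m.subtype ∘ z), hGfin, ?_, hspan'⟩
  have hle : (Set.range (m.subtype ∘ z)).ncard ≤
      Module.finrank (IsLocalRing.ResidueField A) (IsLocalRing.CotangentSpace A ⧸ W) := by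
    have := Set.ncard_image_le (f := (m.subtype ∘ z)) Set.finite_univ
    rwa [Set.image_univ, Set.ncard_univ, Nat.card_eq_fintype_card, Fintype.card_fin] at this
  have hge : m.spanFinrank ≤ n + (Set.range (m.subtype ∘ z)).ncard := by
    have h1 := Submodule.spanFinrank_span_le_ncard_of_finite (R := A)
      ((Set.finite_range (fun i => algebraMap S A (h i))).union hGfin)
    have h2 := Set.ncard_union_le (Set.range (fun i => algebraMap S A (h i)))
      (Set.range (m.subtype ∘ z))
    have h3 : (Set.range (fun i => algebraMap S A (h i))).ncard ≤ n := by
      have := Set.ncard_image_le (f := (fun i => algebraMap S A (h i))) Set.finite_univ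
      rwa [Set.image_univ, Set.ncard_univ, Nat.card_eq_fintype_card, Fintype.card_fin] at this
    have h4 : (Submodule.span A (Set.range (fun i => algebraMap S A (h i)) ∪
      Set.range (m.subtype ∘ z))) = m := hspan'
    rw [h4] at h1
    omega
  omega

lemma GL_regular {S : Type*} [CommRing S] [IsRegularRing S]
    (n : ℕ) (h : Fin n → S) (I : Ideal S) (hI : I = Ideal.span (Set.range h))
    (q : Ideal (S ⧸ I)) [q.IsPrime]
    (hind : ∀ s : Fin n → S, ∑ i, s i * h i ∈ (q.comap (Ideal.Quotient.mk I)) ^ 2 →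
      ∀ i, s i ∈ q.comap (Ideal.Quotient.mk I)) :
    IsRegularLocalRing (Localization.AtPrime q) := by
  set P := q.comap (Ideal.Quotient.mk I) with hPdef
  have hIP : I ≤ P := by
    intro x hx
    rw [hPdef, Ideal.mem_comap, Ideal.Quotient.eq_zero_iff_mem.2 hx]
    exact q.zero_mem
  have hP : ∀ i, h i ∈ P := fun i => hIP (hI ▸ Ideal.subset_span ⟨i, rfl⟩)
  obtain ⟨G, hGfin, hGc, hG⟩ := GL_gens P n h hP hind
  have hmapP : P.map (Ideal.Quotient.mk I) = q :=
    Ideal.map_comap_of_surjective _ Ideal.Quotient.mk_surjective q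
  let f := Localization.localRingHom P q (Ideal.Quotient.mk I) rfl
  have hf : f.comp (algebraMap S (Localization.AtPrime P)) =
      (algebraMap (S ⧸ I) (Localization.AtPrime q)).comp (Ideal.Quotient.mk I) :=
    RingHom.ext fun x => Localization.localRingHom_to_map _ _ _ rfl x
  have hm : IsLocalRing.maximalIdeal (Localization.AtPrime q) = Ideal.span (f '' G) := by
    rw [← Localization.AtPrime.map_eq_maximalIdeal]
    have hmm := congrArg (Ideal.map (algebraMap (S ⧸ I) (Localization.AtPrime q))) hmapP
    rw [← hmm, Ideal.map_map, ← hf, ← Ideal.map_map, Localization.AtPrime.map_eq_maximalIdeal, ← hG,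
      Ideal.map_span, Set.image_union, Ideal.span_union, sup_eq_right, Ideal.span_le]
    rintro _ ⟨_, ⟨i, rfl⟩, rfl⟩
    have h1 : f (algebraMap S (Localization.AtPrime P) (h i)) = 0 := by
      have := congrArg (fun g => g (h i)) hf
      simp only [RingHom.comp_apply] at this
      rw [this, Ideal.Quotient.eq_zero_iff_mem.2 (hI ▸ Ideal.subset_span ⟨i, rfl⟩), map_zero]
    simp [h1]
  have hregP : IsRegularLocalRing (Localization.AtPrime P) := inferInstance
  rw [isRegularLocalRing_iff] at hregP
  rw [← IsLocalRing.maximalIdeal_height_eq_ringKrullDim,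
    ← IsLocalization.height_under P.primeCompl,
    IsLocalization.AtPrime.under_maximalIdeal _ P] at hregP
  have hregP' : ((IsLocalRing.maximalIdeal (Localization.AtPrime P)).spanFinrank : ℕ∞) =
    P.height := by exact_mod_cast hregP
  have hht := Ideal.height_le_height_add_spanFinrank_of_le hIP
  rw [hmapP] at hht
  have hIn : I.spanFinrank ≤ n := by
    have h1 := Submodule.spanFinrank_span_le_ncard_of_finite (R := S) (Set.finite_range h)
    have := Set.ncard_image_le (f := h) Set.finite_univ
    rw [Set.image_univ, Set.ncard_univ, Nat.card_eq_fintype_card, Fintype.card_fin] at this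
    rw [hI]
    exact h1.trans this
  apply IsRegularLocalRing.of_spanFinrank_maximalIdeal_le
  rw [← IsLocalRing.maximalIdeal_height_eq_ringKrullDim,
    ← IsLocalization.height_under q.primeCompl,
    IsLocalization.AtPrime.under_maximalIdeal _ q]
  have hB : (IsLocalRing.maximalIdeal (Localization.AtPrime q)).spanFinrank ≤ G.ncard := by
    rw [hm]
    exact (Submodule.spanFinrank_span_le_ncard_of_finite (hGfin.image f)).trans
      (Set.ncard_image_le hGfin)
  have hfinal : ((IsLocalRing.maximalIdeal (Localization.AtPrime q)).spanFinrank : ℕ∞) ≤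
      q.height := by
    rw [← hregP', ← hGc] at hht
    have h2 : ((G.ncard + n : ℕ) : ℕ∞) ≤ q.height + (n : ℕ∞) :=
      hht.trans (by gcongr)
    rw [Nat.cast_add] at h2
    have h3 := (ENat.add_le_add_iff_right (ENat.natCast_ne_top n)).1 h2
    exact le_trans (by exact_mod_cast hB) h3
  exact_mod_cast WithBot.coe_le_coe.2 hfinal

lemma GL_isRegularLocal (A : Type*) [CommRing A] [IsLocalRing A] [hA : IsRegularLocalRing A] :
    IsRegularLocal A := by
  refine ⟨inferInstance, ?_⟩
  have fg : Submodule.FG (IsLocalRing.maximalIdeal A) :=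
    (IsLocalRing.maximalIdeal A).fg_of_isNoetherianRing
  refine ⟨fg.finite_generators.toFinset, ?_, ?_⟩
  · rw [Set.Finite.coe_toFinset]
    exact (IsLocalRing.maximalIdeal A).span_generators
  · rw [← Set.ncard_eq_toFinset_card _ fg.finite_generators, fg.generators_ncard]
    exact (isRegularLocalRing_iff A).1 hA

/-- Assume `char k = 0` and the hyperplanes are in general position.
Let `R_+` be the ideal of `R` generated by the images of all the variables. Then for
every prime ideal `𝔭 ≠ R_+` of `R`, the localization `R_𝔭` is a regular local ring;
in particular `R` has isolated singularities. -/
theorem GLring_isolated_singularity (k : Type*) [Field k] [CharZero k]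
    (d n : ℕ) (hd : 1 ≤ d) (p : Fin n → ℕ) (hp : ∀ i, 0 < p i)
    (lam : Fin n → Fin (d + 1) → k)
    (hgen : ∀ t : Finset (Fin n), t.card ≤ d + 1 →
      LinearIndependent k (fun i : t => lam i))
    (𝔭 : Ideal (GLring k d n p lam)) [𝔭.IsPrime]
    (h𝔭 : 𝔭 ≠ Ideal.span (Set.range fun v : Fin (d + 1) ⊕ Fin n =>
      Ideal.Quotient.mk (Ideal.span (Set.range (GLh k d n p lam))) (X v))) :
    IsRegularLocal (Localization.AtPrime 𝔭) := by
  have hreg : IsRegularLocalRing (Localization.AtPrime 𝔭) := by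
    refine GL_regular n (GLh k d n p lam) _ rfl 𝔭 ?_
    refine GL_jacobian k d n p hp lam hgen _ ?_ ?_
    · intro i
      have h0 : GLh k d n p lam i ∈ Ideal.span (Set.range (GLh k d n p lam)) :=
        Ideal.subset_span ⟨i, rfl⟩
      rw [Ideal.mem_comap, Ideal.Quotient.eq_zero_iff_mem.2 h0]
      exact 𝔭.zero_mem
    · by_contra hcon
      push Not at hcon
      refine h𝔭 (le_antisymm ?_ ?_)
      · intro x hx
        obtain ⟨f, rfl⟩ := Ideal.Quotient.mk_surjective x
        -- subtract the constant coefficient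
        have hvars : ∀ J : Ideal (MvPolynomial (Fin (d + 1) ⊕ Fin n) k), (∀ v, X v ∈ J) →
            f - C (constantCoeff f) ∈ J := by
          intro J hJ
          have h1 : ∀ g : MvPolynomial (Fin (d + 1) ⊕ Fin n) k, g - C (constantCoeff g) ∈ J := by
            intro g
            induction g using MvPolynomial.induction_on with
            | C a => simp
            | add a b ha hb =>
              have := J.add_mem ha hb
              rw [map_add, map_add]
              convert this using 1
              ring
            | mul_X a v _ =>
              simpa using J.mul_mem_left a (hJ v)
          exact h1 f
        have hPv := hvars _ hcon
        have hc : constantCoeff f = 0 := by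
          by_contra hne
          have h1 := Ideal.sub_mem _ (Ideal.mem_comap.2 hx) hPv
          rw [sub_sub_cancel] at h1
          exact (Ideal.IsPrime.ne_top (Ideal.comap_isPrime (Ideal.Quotient.mk _) 𝔭))
            (Ideal.eq_top_of_isUnit_mem _ h1 ((isUnit_iff_ne_zero.2 hne).map C))
        have h2 := hvars (Ideal.comap (Ideal.Quotient.mk _) (Ideal.span (Set.range
          fun v : Fin (d + 1) ⊕ Fin n =>
            Ideal.Quotient.mk (Ideal.span (Set.range (GLh k d n p lam))) (X v))))
          (fun v => Ideal.mem_comap.2 (Ideal.subset_span ⟨v, rfl⟩))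
        rw [hc, map_zero, sub_zero] at h2
        exact h2
      · rw [Ideal.span_le]
        rintro _ ⟨v, rfl⟩
        exact hcon v
  exact GL_isRegularLocal _
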